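/- Let z ∈ k[X] satisfy d(z) = 0 and e(z) = w·z for a natural number w, and for 0 ≤ i ≤ w set v_i := ((w−i)!/(i!·w!))·d̂^i(z) (a rational multiple, which makes sense since char k = 0). Then d(v_0) = 0 and d(v_i) = v_{i−1} for every 1 ≤ i ≤ w; that is, the span of v_0,…,v_m (m ≤ w) is a d-module on which d acts exactly as on the span of x_0,…,x_m. -/

import Mathlib

open MvPolynomial Finset

/-- The Weitzenböck derivation `d` on `k[x_0,…,x_n]`: `d(x_i) = x_{i-1}` for
`1 ≤ i ≤ n` and `d(x_0) = 0`. -/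
noncomputable def weitz (k : Type*) [Field k] [CharZero k] (n : ℕ) :
    Derivation k (MvPolynomial (Fin (n + 1)) k) (MvPolynomial (Fin (n + 1)) k) :=
  mkDerivation k (fun i : Fin (n + 1) =>
    if _ : (i : ℕ) = 0 then 0
    else X (⟨(i : ℕ) - 1, by have := i.isLt; omega⟩ : Fin (n + 1)))

/-- The derivation `d̂` on `k[x_0,…,x_n]`: `d̂(x_i) = (i+1)(n−i)·x_{i+1}` for
`0 ≤ i ≤ n−1` and `d̂(x_n) = 0`. -/
noncomputable def dhat (k : Type*) [Field k] [CharZero k] (n : ℕ) :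
    Derivation k (MvPolynomial (Fin (n + 1)) k) (MvPolynomial (Fin (n + 1)) k) :=
  mkDerivation k (fun i : Fin (n + 1) =>
    if h : (i : ℕ) = n then 0
    else ((((i : ℕ) + 1) * (n - (i : ℕ)) : ℕ) : k) •
      X (⟨(i : ℕ) + 1, by have := i.isLt; omega⟩ : Fin (n + 1)))

/-- The derivation `e` on `k[x_0,…,x_n]`: `e(x_i) = (n−2i)·x_i`. -/
noncomputable def ee (k : Type*) [Field k] [CharZero k] (n : ℕ) :
    Derivation k (MvPolynomial (Fin (n + 1)) k) (MvPolynomial (Fin (n + 1)) k) :=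
  mkDerivation k (fun i : Fin (n + 1) => ((n : ℤ) - 2 * (i : ℕ)) • X i)

/-!
For `n ≠ 0` the derivations `e`, `d`, `d̂` form an `sl₂` triple, with `d` raising and `d̂` lowering.
A nonzero `z` with `d(z) = 0` and `e(z) = w·z` is then a primitive vector of weight `w`, so that
`d(d̂^{i+1}(z)) = (i+1)(w-i)·d̂^i(z)`, and the factors `(w-i)!/(i!·w!)` cancel exactly these
scalars.
-/

section SlTwoModule

open LieModule

variable {k L M : Type*} [Field k] [LieRing L] [LieAlgebra k L]
  [AddCommGroup M] [Module k M] [LieRingModule L M] [LieModule k L M]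

variable (k) in
/-- The rescaled orbit `v_i = ((w-i)!/(i!·w!))·f^i m` of a vector `m` of weight `w` under the
lowering operator `f`. The scaling is the one making the raising operator act as a plain shift. As
`w - i` is truncated subtraction, only the terms with `i ≤ w` are meaningful. -/
noncomputable def normalizedOrbit (f : L) (m : M) (w i : ℕ) : M :=
  (((w - i).factorial : k) / ((i.factorial * w.factorial : ℕ) : k)) • (toEnd k L M f ^ i) m

theorem factorial_div_mul_succ_mul_sub [CharZero k] {w i : ℕ} (hi : i < w) :
    ((w - (i + 1)).factorial : k) / (((i + 1).factorial * w.factorial : ℕ) : k) *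
      ((i + 1) * (w - i)) =
    ((w - i).factorial : k) / ((i.factorial * w.factorial : ℕ) : k) := by
  have hfac : (w - i).factorial = (w - i) * (w - (i + 1)).factorial :=
    (Nat.mul_factorial_pred (Nat.sub_ne_zero_of_lt hi)).symm
  rw [hfac, Nat.factorial_succ]
  push_cast [Nat.cast_sub hi.le]
  field_simp

theorem lie_normalizedOrbit_succ [CharZero k] {h e f : L} {t : IsSl2Triple h e f} {m : M} {w i : ℕ}
    (hm : t.HasPrimitiveVectorWith m (w : k)) (hi : i < w) :
    ⁅e, normalizedOrbit k f m w (i + 1)⁆ = normalizedOrbit k f m w i := by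
  rw [normalizedOrbit, lie_smul, hm.lie_e_pow_succ_toEnd_f, smul_smul,
    factorial_div_mul_succ_mul_sub hi, normalizedOrbit]

end SlTwoModule

section Weitzenbock

variable {k : Type*} [Field k] [CharZero k] {n : ℕ}

theorem weitz_X_zero : weitz k n (X 0) = 0 := by
  simp [weitz, mkDerivation_X]

theorem weitz_X_succ (j : Fin n) : weitz k n (X j.succ) = X j.castSucc :=
  mkDerivation_X k _ j.succ

theorem dhat_X_last : dhat k n (X (Fin.last n)) = 0 := by
  simp [dhat, mkDerivation_X]

theorem dhat_X_castSucc (j : Fin n) :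
    dhat k n (X j.castSucc) = (((j : ℕ) + 1) * ((n : k) - (j : ℕ))) • X j.succ := by
  simp [dhat, mkDerivation_X, j.is_lt.ne, Nat.cast_sub j.is_lt.le, Fin.succ]

theorem ee_X (i : Fin (n + 1)) : ee k n (X i) = ((n : k) - 2 * (i : ℕ)) • X i := by
  rw [ee, mkDerivation_X, ← Int.cast_smul_eq_zsmul k]
  push_cast
  rfl

theorem weitz_dhat_X (i : Fin (n + 1)) :
    weitz k n (dhat k n (X i)) = (((i : ℕ) + 1) * ((n : k) - (i : ℕ))) • X i := by
  cases i using Fin.lastCases with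
  | last => simp [dhat_X_last]
  | cast j => simp [dhat_X_castSucc, weitz_X_succ]

theorem dhat_weitz_X (i : Fin (n + 1)) :
    dhat k n (weitz k n (X i)) = ((i : ℕ) * ((n : k) + 1 - (i : ℕ))) • X i := by
  cases i using Fin.cases with
  | zero => simp [weitz_X_zero]
  | succ j => simp [weitz_X_succ, dhat_X_castSucc]

theorem lie_weitz_dhat : ⁅weitz k n, dhat k n⁆ = ee k n := by
  refine derivation_ext fun i => ?_
  rw [Derivation.commutator_apply, weitz_dhat_X, dhat_weitz_X, ee_X, ← sub_smul]
  congr 1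
  ring

theorem lie_ee_weitz : ⁅ee k n, weitz k n⁆ = 2 • weitz k n := by
  refine derivation_ext fun i => ?_
  rw [Derivation.commutator_apply, ee_X, Derivation.map_smul, Derivation.smul_apply]
  cases i using Fin.cases with
  | zero => simp only [weitz_X_zero, map_zero, smul_zero, sub_zero]
  | succ j =>
    rw [weitz_X_succ, ee_X, ← sub_smul, ← Nat.cast_smul_eq_nsmul k, Fin.val_succ, Fin.val_castSucc]
    congr 1
    push_cast
    ring

theorem lie_ee_dhat : ⁅ee k n, dhat k n⁆ = -(2 • dhat k n) := by
  refine derivation_ext fun i => ?_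
  rw [Derivation.commutator_apply, ee_X, Derivation.map_smul, Derivation.neg_apply,
    Derivation.smul_apply]
  cases i using Fin.lastCases with
  | last => simp only [dhat_X_last, map_zero, smul_zero, sub_zero, neg_zero]
  | cast j =>
    rw [dhat_X_castSucc, Derivation.map_smul, ee_X, ← Nat.cast_smul_eq_nsmul k, Fin.val_succ,
      Fin.val_castSucc]
    module

theorem ee_eq_zero_iff : ee k n = 0 ↔ n = 0 := by
  constructor
  · intro h
    have hX : (n : k) • (X 0 : MvPolynomial (Fin (n + 1)) k) = 0 := by
      simpa [h] using (ee_X (k := k) (0 : Fin (n + 1))).symm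
    simpa using hX
  · rintro rfl
    exact derivation_ext fun i => by simp [ee_X]

theorem isSl2Triple_ee_weitz_dhat (hn : n ≠ 0) :
    IsSl2Triple (ee k n) (weitz k n) (dhat k n) where
  h_ne_zero := ee_eq_zero_iff.not.mpr hn
  lie_e_f := lie_weitz_dhat
  lie_h_e_nsmul := lie_ee_weitz
  lie_h_f_nsmul := lie_ee_dhat

end Weitzenbock

/-- If `d(z) = 0` and `e(z) = w·z` for a natural number `w`, and
`v_i := ((w−i)!/(i!·w!))·d̂^i(z)`, then `d(v_0) = 0` and `d(v_i) = v_{i−1}` for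
`1 ≤ i ≤ w`; so `⟨v_0,…,v_m⟩` is a `d`-module isomorphic to `⟨x_0,…,x_m⟩`. -/
theorem dhat_orbit_is_standard_d_module (k : Type*) [Field k] [CharZero k] (n : ℕ)
    (z : MvPolynomial (Fin (n + 1)) k) (w : ℕ)
    (hd : weitz k n z = 0) (he : ee k n z = (w : k) • z)
    (v : ℕ → MvPolynomial (Fin (n + 1)) k)
    (hv : ∀ i, v i = (((w - i).factorial : k) / ((i.factorial * w.factorial : ℕ) : k))
      • (⇑(dhat k n))^[i] z) :
    weitz k n (v 0) = 0 ∧ ∀ i, 1 ≤ i → i ≤ w → weitz k n (v i) = v (i - 1) := by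
  obtain rfl : v = normalizedOrbit k (dhat k n) z w :=
    funext fun i => by rw [hv, normalizedOrbit, Module.End.pow_apply]; rfl
  refine ⟨by simp [normalizedOrbit, hd], fun i hi hiw => ?_⟩
  obtain ⟨j, rfl⟩ := Nat.exists_eq_add_of_le' hi
  obtain rfl | hz := eq_or_ne z 0
  · simp [normalizedOrbit]
  have hn : n ≠ 0 := by
    intro hn
    have hwz : (w : k) • z = 0 := by rw [← he, ee_eq_zero_iff.mpr hn, Derivation.zero_apply]
    have hw : w = 0 := by simpa [hz] using hwz
    omega
  have hprim : (isSl2Triple_ee_weitz_dhat (k := k) hn).HasPrimitiveVectorWith z (w : k) :=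
    { ne_zero := hz, lie_h := he, lie_e := hd }
  exact lie_normalizedOrbit_succ hprim hiw
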